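/- For all m, r ≥ 0, occ((01)^m, (01)^r) = C(m + r, 2r), where C denotes the binomial coefficient (so in particular the count is 0 when r > m). -/

import Mathlib

/-!
The words `(01)^m` and `(01)^r` are alternating words ending in the same letter. For such words, of
lengths `n` and `k`, the number of occurrences is `C(⌊(n + k) / 2⌋, k)`. Indeed, split the
occurrences according to whether they use the first letter of the text. The first letters of the two
words agree exactly when `n` and `k` have the same parity. In that case the splitting is Pascal's
rule; otherwise the first letter of the text is never used, and the rounding absorbs its deletion.
-/

open List Real

/-- `occ w u` is the number of occurrences of `u` as a subword (subsequence) of `w`,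
i.e. the multiplicity of `u` among the `2^|w|` sublists of `w`. -/
def occ {α : Type*} [DecidableEq α] (w u : List α) : ℕ := w.sublists.count u

/-- `maxocc w` is the maximal number of occurrences of any subword of `w`. -/
noncomputable def maxocc {α : Type*} [DecidableEq α] (w : List α) : ℕ :=
  sSup {n : ℕ | ∃ u : List α, occ w u = n}

/-- `rep v m` is the concatenation of `m` copies of the word `v`. -/
def rep {α : Type*} (v : List α) (m : ℕ) : List α := (List.replicate m v).flatten

section Occ

variable {α : Type*} [DecidableEq α]

theorem occ_nil_cons (b : α) (u : List α) : occ [] (b :: u) = 0 := by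
  simp [occ]

theorem occ_cons (a : α) (w u : List α) :
    occ (a :: w) u = occ w u + (w.sublists.map (a :: ·)).count u := by
  rw [occ, (sublists_cons_perm_append a w).count_eq, count_append, occ]

theorem occ_nil_right (w : List α) : occ w [] = 1 := by
  induction w with
  | nil => simp [occ]
  | cons a w ih => rw [occ_cons, ih, count_eq_zero_of_not_mem (by simp)]

theorem occ_cons_cons_self (a : α) (w u : List α) :
    occ (a :: w) (a :: u) = occ w (a :: u) + occ w u := by
  rw [occ_cons, count_map_of_injective _ _ cons_injective, ← occ]

theorem occ_cons_cons_of_ne {a b : α} (hab : a ≠ b) (w u : List α) :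
    occ (a :: w) (b :: u) = occ w (b :: u) := by
  rw [occ_cons, count_eq_zero_of_not_mem (by simp [hab]), Nat.add_zero]

end Occ

section AlternatingWord

open CoxeterSystem

variable {α : Type*}

theorem rep_pair_eq_alternatingWord (a b : α) (m : ℕ) :
    rep [a, b] m = alternatingWord a b (2 * m) := by
  induction m with
  | zero => rfl
  | succ m ih =>
    calc rep [a, b] (m + 1) = a :: b :: rep [a, b] m := by simp [rep, replicate_succ]
      _ = alternatingWord a b (2 * (m + 1)) := by
        rw [ih, Nat.mul_succ, alternatingWord_succ', alternatingWord_succ']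
        simp

theorem occ_alternatingWord [DecidableEq α] {a b : α} (hab : a ≠ b) (n k : ℕ) :
    occ (alternatingWord a b n) (alternatingWord a b k) = ((n + k) / 2).choose k := by
  induction n generalizing k with
  | zero =>
    cases k with
    | zero => exact occ_nil_right []
    | succ k =>
      rw [alternatingWord_succ', alternatingWord, occ_nil_cons,
        Nat.choose_eq_zero_of_lt (by omega)]
  | succ n ih =>
    cases k with
    | zero => rw [alternatingWord, occ_nil_right, Nat.choose_zero_right]
    | succ k =>
      have hsucc : (n + 1 + (k + 1)) / 2 = (n + k) / 2 + 1 := by omega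
      have ih_succ := ih (k + 1)
      rw [alternatingWord_succ' a b k] at ih_succ
      rw [alternatingWord_succ' a b n, alternatingWord_succ' a b k, hsucc]
      by_cases hparity : Even n ↔ Even k
      · have hhalf : (n + (k + 1)) / 2 = (n + k) / 2 := by grind
        simp only [hparity]
        rw [occ_cons_cons_self, ih_succ, ih k, hhalf, Nat.choose_succ_succ', Nat.add_comm]
      · have hhalf : (n + (k + 1)) / 2 = (n + k) / 2 + 1 := by grind
        have hletters : (if Even n then b else a) ≠ if Even k then b else a := by grind
        rw [occ_cons_cons_of_ne hletters, ih_succ, hhalf]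

end AlternatingWord

theorem stmt_13_general {α : Type*} [DecidableEq α] {a b : α} (hab : a ≠ b) (m r : ℕ) :
    occ (rep [a, b] m) (rep [a, b] r) = (m + r).choose (2 * r) := by
  have hhalf : (2 * m + 2 * r) / 2 = m + r := by omega
  rw [rep_pair_eq_alternatingWord, rep_pair_eq_alternatingWord, occ_alternatingWord hab, hhalf]

theorem stmt_13 (m r : ℕ) :
    occ (rep ([0, 1] : List (Fin 2)) m) (rep [0, 1] r) = (m + r).choose (2 * r) :=
  stmt_13_general zero_ne_one m r
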